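/- In the setting of the 1-SAM gradient flow for the diagonal linear network (ℓ_i(w) = (1/4)(⟨β(w), x_i⟩ − y_i)², flow w′(t) = −(1/n)∑_i ∇ℓ_i(w(t) + ρ∇ℓ_i(w(t))), w(0) = (α, α), r_i(t) = ⟨β(w(t)), x_i⟩ − y_i, r_{sam,i}(t) = ⟨β(w(t) + ρ∇ℓ_i(w(t))), x_i⟩ − y_i), assume additionally that there exist R, B ≥ 0 and β* ∈ ℝ^d with Xβ* = y such that ‖x_i‖₂ ≤ R for all i and ‖β(w(t))‖₂ ≤ B for all t ≥ 0, and that 0 ≤ ρ ≤ 1/(4R²√(B(B + ‖β*‖₂))). Then for every i and t ≥ 0 one has r_{sam,i}(t)·r_i(t) ≥ 0; consequently, whenever the integrals ∫₀^∞ r_{sam,i}(s) r_i(s) ds converge, the effective initialization α′ defined componentwise by (α′_j)² = α_j²·exp(−(2ρ/n)·∑_{i=1}^n x_{ij}²·∫₀^∞ r_{sam,i}(s) r_i(s) ds) satisfies α′_j ≤ α_j for every j ∈ {1,…,d}. -/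

import Mathlib

/-!
Write `r` for the residual of example `i` at a parameter `w` and `x` for `xᵢ`. The ascent step
multiplies `(w₊)ⱼ` and `(w₋)ⱼ` by `1 + ρ r xⱼ` and `1 - ρ r xⱼ`, so the residual at the perturbed
point is `r` times `1 + ρ² r ∑ⱼ xⱼ³ βⱼ + 2ρ ∑ⱼ xⱼ² ((w₊)ⱼ² + (w₋)ⱼ²)`. The last term is nonnegative,
and since `r = ⟨β - β*, x⟩`, Cauchy–Schwarz bounds the middle one by `ρ² R⁴ B (B + ‖β*‖) ≤ 1` in
absolute value. Hence the product of the two residuals is nonnegative at every single parameter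
with `‖β(w)‖ ≤ B`, so the exponent defining the effective initialization is nonpositive.
-/

open scoped RealInnerProductSpace

noncomputable section

/-- Linear predictor of a diagonal linear network: `β(w)ⱼ = (w₊)ⱼ² − (w₋)ⱼ²`, where the
parameter vector `v ∈ ℝ^{2d}` is indexed by `Fin d ⊕ Fin d` (`inl` = `w₊`, `inr` = `w₋`). -/
def betaOf {d : ℕ} (v : EuclideanSpace ℝ (Fin d ⊕ Fin d)) (j : Fin d) : ℝ :=
  v (Sum.inl j) ^ 2 - v (Sum.inr j) ^ 2

/-- Residual of the predictor at the `i`-th data point: `⟨β(v), xᵢ⟩ − yᵢ`. -/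
def resid {d n : ℕ} (X : Matrix (Fin n) (Fin d) ℝ) (y : Fin n → ℝ)
    (v : EuclideanSpace ℝ (Fin d ⊕ Fin d)) (i : Fin n) : ℝ :=
  ∑ j, X i j * betaOf v j - y i

/-- The per-example squared loss `ℓᵢ(w) = (1/4)(⟨β(w), xᵢ⟩ − yᵢ)²`. -/
def exLoss {d n : ℕ} (X : Matrix (Fin n) (Fin d) ℝ) (y : Fin n → ℝ) (i : Fin n)
    (v : EuclideanSpace ℝ (Fin d ⊕ Fin d)) : ℝ :=
  (1 / 4 : ℝ) * resid X y v i ^ 2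

/-- The 1-SAM ascent point for example `i`: `w(t) + ρ∇ℓᵢ(w(t))`. -/
def oneSamAscent {d n : ℕ} (X : Matrix (Fin n) (Fin d) ℝ) (y : Fin n → ℝ) (ρ : ℝ)
    (w : ℝ → EuclideanSpace ℝ (Fin d ⊕ Fin d)) (i : Fin n) (t : ℝ) :
    EuclideanSpace ℝ (Fin d ⊕ Fin d) :=
  w t + ρ • gradient (exLoss X y i) (w t)

end

section AscentStep

variable {d n : ℕ} (X : Matrix (Fin n) (Fin d) ℝ) (y : Fin n → ℝ) (i : Fin n) (ρ : ℝ)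
  (v : EuclideanSpace ℝ (Fin d ⊕ Fin d))

theorem hasGradientAt_resid :
    HasGradientAt (fun u => resid X y u i)
      ((2 : ℝ) • WithLp.toLp 2 (Sum.elim (fun j => X i j * v (Sum.inl j))
        fun j => -(X i j * v (Sum.inr j)))) v := by
  rw [hasGradientAt_iff_hasFDerivAt]
  have hcoord (k : Fin d ⊕ Fin d) :=
    (EuclideanSpace.proj k : EuclideanSpace ℝ (Fin d ⊕ Fin d) →L[ℝ] ℝ).hasFDerivAt (x := v)
  have hterm (j : Fin d) :=
    (((hcoord (Sum.inl j)).pow 2).sub ((hcoord (Sum.inr j)).pow 2)).const_mul (X i j)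
  have hresid := (HasFDerivAt.fun_sum (u := Finset.univ) fun j _ => hterm j).sub_const (y i)
  refine hresid.congr_fderiv (f := fun u => resid X y u i) ?_
  ext u
  simp only [PiLp.proj_apply, Nat.add_one_sub_one, pow_one, nsmul_eq_mul, Nat.cast_ofNat, sum_apply,
    smul_apply, sub_apply, smul_eq_mul, map_smul, InnerProductSpace.toDual_apply_apply,
    PiLp.inner_apply, RCLike.inner_apply, Real.ringHom_apply, Fintype.sum_sum_type, Sum.elim_inl,
    Sum.elim_inr, mul_neg, Finset.sum_neg_distrib]
  rw [← sub_eq_add_neg, ← Finset.sum_sub_distrib, Finset.mul_sum]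
  exact Finset.sum_congr rfl fun j _ => by ring

theorem hasGradientAt_exLoss :
    HasGradientAt (exLoss X y i)
      (resid X y v i • WithLp.toLp 2 (Sum.elim (fun j => X i j * v (Sum.inl j))
        fun j => -(X i j * v (Sum.inr j)))) v := by
  have hsq := ((hasGradientAt_resid X y i v).hasFDerivAt.pow 2).const_mul (1 / 4 : ℝ)
  rw [hasGradientAt_iff_hasFDerivAt]
  refine hsq.congr_fderiv (f := exLoss X y i) ?_
  simp only [map_smul, smul_smul, nsmul_eq_mul]
  congr 1
  push_cast
  ring

theorem betaOf_add_smul_gradient_exLoss (j : Fin d) :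
    betaOf (v + ρ • gradient (exLoss X y i) v) j =
      (1 + (ρ * resid X y v i * X i j) ^ 2) * betaOf v j +
        2 * (ρ * resid X y v i * X i j) * (v (Sum.inl j) ^ 2 + v (Sum.inr j) ^ 2) := by
  simp only [(hasGradientAt_exLoss X y i v).gradient, betaOf, PiLp.add_apply, PiLp.smul_apply,
    Sum.elim_inl, Sum.elim_inr, smul_eq_mul]
  ring

theorem resid_add_smul_gradient_exLoss :
    resid X y (v + ρ • gradient (exLoss X y i) v) i =
      resid X y v i *
        (1 + ρ ^ 2 * (resid X y v i * ∑ j, X i j ^ 2 * (X i j * betaOf v j)) +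
          2 * ρ * ∑ j, X i j ^ 2 * (v (Sum.inl j) ^ 2 + v (Sum.inr j) ^ 2)) := by
  set r := resid X y v i with hr
  have hsum : ∑ j, X i j * betaOf (v + ρ • gradient (exLoss X y i) v) j =
      ∑ j, X i j * betaOf v j +
        r * (ρ ^ 2 * (r * ∑ j, X i j ^ 2 * (X i j * betaOf v j)) +
          2 * ρ * ∑ j, X i j ^ 2 * (v (Sum.inl j) ^ 2 + v (Sum.inr j) ^ 2)) := by
    simp only [betaOf_add_smul_gradient_exLoss, Finset.mul_sum, ← Finset.sum_add_distrib, ← hr]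
    exact Finset.sum_congr rfl fun j _ => by ring
  have hr_eq : r = ∑ j, X i j * betaOf v j - y i := rfl
  rw [resid, hsum]
  linear_combination -hr_eq

end AscentStep

section CauchySchwarz

variable {ι : Type*} {s : Finset ι} {x b c : ι → ℝ} {R B C ρ : ℝ}

theorem sum_abs_mul_le_of_sqrt_sum_sq_le (hx : √(∑ j ∈ s, x j ^ 2) ≤ R)
    (hb : √(∑ j ∈ s, b j ^ 2) ≤ B) : ∑ j ∈ s, |x j * b j| ≤ R * B :=
  calc ∑ j ∈ s, |x j * b j|
    _ ≤ √(∑ j ∈ s, x j ^ 2) * √(∑ j ∈ s, b j ^ 2) := by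
      simpa only [abs_mul, sq_abs] using
        Real.sum_mul_le_sqrt_mul_sqrt s (fun j => |x j|) fun j => |b j|
    _ ≤ R * B := mul_le_mul hx hb (Real.sqrt_nonneg _) ((Real.sqrt_nonneg _).trans hx)

theorem abs_sum_mul_le_of_sqrt_sum_sq_le (hx : √(∑ j ∈ s, x j ^ 2) ≤ R)
    (hb : √(∑ j ∈ s, b j ^ 2) ≤ B) : |∑ j ∈ s, x j * b j| ≤ R * B :=
  (Finset.abs_sum_le_sum_abs _ _).trans (sum_abs_mul_le_of_sqrt_sum_sq_le hx hb)

theorem abs_sum_sq_mul_mul_le_of_sqrt_sum_sq_le (hx : √(∑ j ∈ s, x j ^ 2) ≤ R)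
    (hb : √(∑ j ∈ s, b j ^ 2) ≤ B) : |∑ j ∈ s, x j ^ 2 * (x j * b j)| ≤ R ^ 2 * (R * B) := by
  have hxj : ∀ j ∈ s, x j ^ 2 ≤ R ^ 2 := fun j hj =>
    (Finset.single_le_sum (fun k _ => sq_nonneg (x k)) hj).trans (Real.sqrt_le_iff.1 hx).2
  calc |∑ j ∈ s, x j ^ 2 * (x j * b j)|
    _ ≤ ∑ j ∈ s, |x j ^ 2 * (x j * b j)| := Finset.abs_sum_le_sum_abs _ _
    _ ≤ ∑ j ∈ s, R ^ 2 * |x j * b j| := Finset.sum_le_sum fun j hj => by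
      rw [abs_mul, abs_sq]
      exact mul_le_mul_of_nonneg_right (hxj j hj) (abs_nonneg _)
    _ = R ^ 2 * ∑ j ∈ s, |x j * b j| := (Finset.mul_sum ..).symm
    _ ≤ R ^ 2 * (R * B) :=
      mul_le_mul_of_nonneg_left (sum_abs_mul_le_of_sqrt_sum_sq_le hx hb) (sq_nonneg R)

theorem abs_sq_mul_sub_mul_sum_le_one (hρ : 0 ≤ ρ) (hx : √(∑ j ∈ s, x j ^ 2) ≤ R)
    (hb : √(∑ j ∈ s, b j ^ 2) ≤ B) (hc : √(∑ j ∈ s, c j ^ 2) ≤ C)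
    (hρR : ρ * (R ^ 2 * √(B * (B + C))) ≤ 1) :
    |ρ ^ 2 * ((∑ j ∈ s, x j * b j - ∑ j ∈ s, x j * c j) *
      ∑ j ∈ s, x j ^ 2 * (x j * b j))| ≤ 1 := by
  have hR : 0 ≤ R := (Real.sqrt_nonneg _).trans hx
  have hB : 0 ≤ B := (Real.sqrt_nonneg _).trans hb
  have hC : 0 ≤ C := (Real.sqrt_nonneg _).trans hc
  have hsub : |∑ j ∈ s, x j * b j - ∑ j ∈ s, x j * c j| ≤ R * B + R * C :=
    (abs_sub _ _).trans (add_le_add (abs_sum_mul_le_of_sqrt_sum_sq_le hx hb)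
      (abs_sum_mul_le_of_sqrt_sum_sq_le hx hc))
  rw [abs_mul, abs_mul, abs_sq]
  calc ρ ^ 2 * (|∑ j ∈ s, x j * b j - ∑ j ∈ s, x j * c j| * |∑ j ∈ s, x j ^ 2 * (x j * b j)|)
    _ ≤ ρ ^ 2 * ((R * B + R * C) * (R ^ 2 * (R * B))) := by
      gcongr
      exact abs_sum_sq_mul_mul_le_of_sqrt_sum_sq_le hx hb
    _ = (ρ * (R ^ 2 * √(B * (B + C)))) ^ 2 := by
      rw [mul_pow, mul_pow, Real.sq_sqrt (by positivity)]
      ring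
    _ ≤ 1 := pow_le_one₀ (by positivity) hρR

end CauchySchwarz

theorem resid_add_smul_gradient_exLoss_mul_resid_nonneg {d n : ℕ} {X : Matrix (Fin n) (Fin d) ℝ}
    {y : Fin n → ℝ} {i : Fin n} {ρ R B : ℝ} {βstar : Fin d → ℝ}
    {v : EuclideanSpace ℝ (Fin d ⊕ Fin d)} (hρ : 0 ≤ ρ) (hβstar : ∑ j, X i j * βstar j = y i)
    (hxR : √(∑ j, X i j ^ 2) ≤ R) (hβB : √(∑ j, betaOf v j ^ 2) ≤ B)
    (hρR : ρ * (R ^ 2 * √(B * (B + √(∑ j, βstar j ^ 2)))) ≤ 1) :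
    0 ≤ resid X y (v + ρ • gradient (exLoss X y i) v) i * resid X y v i := by
  have hcubic : -1 ≤ ρ ^ 2 * (resid X y v i * ∑ j, X i j ^ 2 * (X i j * betaOf v j)) := by
    rw [resid, ← hβstar]
    exact neg_le_of_abs_le (abs_sq_mul_sub_mul_sum_le_one hρ hxR hβB le_rfl hρR)
  have hquad : 0 ≤ 2 * ρ * ∑ j, X i j ^ 2 * (v (Sum.inl j) ^ 2 + v (Sum.inr j) ^ 2) := by
    positivity
  rw [resid_add_smul_gradient_exLoss, mul_right_comm]
  exact mul_nonneg (mul_self_nonneg _) (by linarith)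

theorem le_of_sq_eq_sq_mul_exp {a a' u : ℝ} (ha : 0 ≤ a) (hu : u ≤ 0)
    (h : a' ^ 2 = a ^ 2 * Real.exp u) : a' ≤ a := by
  refine le_of_abs_le (abs_le_of_sq_le_sq ?_ ha)
  rw [h]
  exact mul_le_of_le_one_right (sq_nonneg a) (Real.exp_le_one_iff.2 hu)

theorem onesam_effective_alpha_decreases_general {d n : ℕ}
    (X : Matrix (Fin n) (Fin d) ℝ) (y : Fin n → ℝ)
    (ρ : ℝ) (hρ : 0 ≤ ρ) (α : Fin d → ℝ) (hα : ∀ j, 0 ≤ α j)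
    (w : ℝ → EuclideanSpace ℝ (Fin d ⊕ Fin d)) (R B : ℝ)
    (βstar : Fin d → ℝ) (hβstar : ∀ i, ∑ j, X i j * βstar j = y i)
    (hxR : ∀ i, √(∑ j, X i j ^ 2) ≤ R)
    (hβB : ∀ t ∈ Set.Ici (0 : ℝ), √(∑ j, betaOf (w t) j ^ 2) ≤ B)
    (hρR : ρ * (R ^ 2 * √(B * (B + √(∑ j, βstar j ^ 2)))) ≤ 1) :
    (∀ i, ∀ t ∈ Set.Ici (0 : ℝ), 0 ≤ resid X y (oneSamAscent X y ρ w i t) i * resid X y (w t) i) ∧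
    ((∀ i : Fin n, MeasureTheory.IntegrableOn
        (fun s => resid X y (oneSamAscent X y ρ w i s) i * resid X y (w s) i) (Set.Ioi 0)) →
      ∀ α' : Fin d → ℝ,
        (∀ j, α' j ^ 2 = α j ^ 2 * Real.exp (-(2 * ρ / n) *
          ∑ i, X i j ^ 2 *
            ∫ s in Set.Ioi (0 : ℝ),
              resid X y (oneSamAscent X y ρ w i s) i * resid X y (w s) i)) →
        ∀ j, α' j ≤ α j) := by
  have hsign : ∀ i, ∀ t ∈ Set.Ici (0 : ℝ),
      0 ≤ resid X y (oneSamAscent X y ρ w i t) i * resid X y (w t) i := fun i t ht =>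
    resid_add_smul_gradient_exLoss_mul_resid_nonneg hρ (hβstar i) (hxR i) (hβB t ht) hρR
  refine ⟨hsign, fun _ α' hα' j => le_of_sq_eq_sq_mul_exp (hα j) ?_ (hα' j)⟩
  refine mul_nonpos_of_nonpos_of_nonneg (neg_nonpos.2 (by positivity)) ?_
  exact Finset.sum_nonneg fun i _ => mul_nonneg (sq_nonneg _)
    (MeasureTheory.setIntegral_nonneg measurableSet_Ioi fun s hs =>
      hsign i s (Set.Ioi_subset_Ici_self hs))

/-- For the 1-SAM gradient flow on a diagonal linear network, if
`‖xᵢ‖₂ ≤ R` for all `i`, `‖β(w(t))‖₂ ≤ B` for all `t ≥ 0`, there is an interpolator `β*`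
(`Xβ* = y`), and `0 ≤ ρ ≤ 1/(4R²√(B(B + ‖β*‖₂)))`, then `r_{sam,i}(t)·rᵢ(t) ≥ 0` for all
`i` and `t ≥ 0`; consequently, whenever the integrals `∫₀^∞ r_{sam,i}(s) rᵢ(s) ds` converge,
the effective initialization `α′` with
`(α′ⱼ)² = αⱼ²·exp(−(2ρ/n)·∑ᵢ xᵢⱼ²·∫₀^∞ r_{sam,i}(s) rᵢ(s) ds)` satisfies `α′ⱼ ≤ αⱼ`
for every `j`. -/
theorem onesam_effective_alpha_decreases {d n : ℕ}
    (X : Matrix (Fin n) (Fin d) ℝ) (y : Fin n → ℝ)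
    (ρ : ℝ) (hρ : 0 ≤ ρ) (α : Fin d → ℝ) (hα : ∀ j, 0 < α j)
    (w : ℝ → EuclideanSpace ℝ (Fin d ⊕ Fin d))
    (hflow : ∀ t ∈ Set.Ici (0 : ℝ), HasDerivWithinAt w
      (-((n : ℝ)⁻¹ • ∑ i, gradient (exLoss X y i) (oneSamAscent X y ρ w i t)))
      (Set.Ici 0) t)
    (hinit : ∀ j, w 0 (Sum.inl j) = α j ∧ w 0 (Sum.inr j) = α j)
    (R B : ℝ) (hR : 0 ≤ R) (hB : 0 ≤ B)
    (βstar : Fin d → ℝ) (hβstar : ∀ i, ∑ j, X i j * βstar j = y i)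
    (hxR : ∀ i, Real.sqrt (∑ j, X i j ^ 2) ≤ R)
    (hβB : ∀ t ∈ Set.Ici (0 : ℝ), Real.sqrt (∑ j, betaOf (w t) j ^ 2) ≤ B)
    (hρbound : ρ ≤ 1 / (4 * R ^ 2 *
      Real.sqrt (B * (B + Real.sqrt (∑ j, βstar j ^ 2))))) :
    (∀ i, ∀ t ∈ Set.Ici (0 : ℝ), 0 ≤ resid X y (oneSamAscent X y ρ w i t) i * resid X y (w t) i) ∧
    ((∀ i : Fin n, MeasureTheory.IntegrableOn
        (fun s => resid X y (oneSamAscent X y ρ w i s) i * resid X y (w s) i) (Set.Ioi 0)) →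
      ∀ α' : Fin d → ℝ, (∀ j, 0 < α' j) →
        (∀ j, α' j ^ 2 = α j ^ 2 * Real.exp (-(2 * ρ / n) *
          ∑ i, X i j ^ 2 *
            ∫ s in Set.Ioi (0 : ℝ),
              resid X y (oneSamAscent X y ρ w i s) i * resid X y (w s) i)) →
        ∀ j, α' j ≤ α j) := by
  have hρR : ρ * (R ^ 2 * √(B * (B + √(∑ j, βstar j ^ 2)))) ≤ 1 := by
    refine le_trans ?_ (mul_le_of_le_div₀ zero_le_one (by positivity) hρbound)
    rw [mul_assoc 4]
    exact mul_le_mul_of_nonneg_left (le_mul_of_one_le_left (by positivity) (by norm_num)) hρ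
  have h := onesam_effective_alpha_decreases_general X y ρ hρ α (fun j => (hα j).le) w R B βstar
    hβstar hxR hβB hρR
  exact ⟨h.1, fun hint α' _ => h.2 hint α'⟩
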